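/- arXiv:2310.02387 — 2 statements merged into one kernel-verified Lean document; each statement's English description precedes it below -/
import Mathlib

section
/- Let n ≥ 4 be an even integer, let A be the matrix defined below, and let i ∈ {0,…,n/2−2}. Consider any fictitious play sequence (i^{(t)}, j^{(t)}) for the identical-payoff game with matrix A with (i^{(1)}, j^{(1)}) = (n, 1). Suppose T₁ ≥ 2 is a round such that: (i^{(T₁)}, j^{(T₁)}) = (i+1, i+1) and the pair (i+1, i+1) is not played at any round t < T₁; (i^{(T₁−1)}, j^{(T₁−1)}) = (n−i, i+1); R^{(T₁)}_r = 0 for every row r with i+2 ≤ r ≤ n−i−1; and C^{(T₁)}_c = 0 for every column c with i+2 ≤ c ≤ n−i. Then there exists a round T₂ > T₁ such that: (i) (i^{(T₂)}, j^{(T₂)}) = (i+1, n−i) and the pair (i+1, n−i) is not played at any round t < T₂; (ii) (i^{(t)}, j^{(t)}) = (i+1, i+1) for every t with T₁ ≤ t ≤ T₂−1; (iii) R^{(T₂)}_{i+1} ≥ (4i+2)·C^{(T₁)}_{i+1}; (iv) R^{(T₂)}_r = 0 for every row r with i+2 ≤ r ≤ n−i−1, and C^{(T₂)}_c = 0 for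 every column c with i+2 ≤ c ≤ n−i−1. -/
/-!
From round `T1` on, as long as the column player keeps playing `i+1`, only rows `i+1` and `n-i`
gain, at rates `4i+2` and `4i+1`. Hence row `i+1`, already optimal at `T1`, becomes the unique best
response (`row_stays`). Meanwhile only columns `i+1` and `n-i` gain, at rates `4i+2` and `4i+3`, so
column `n-i`, starting from `0`, closes its gap `C_{i+1}^{(T1)}` by exactly one per round. The column
player must therefore leave `i+1` eventually; `T2` is the first such round. The only possible
deviation is to `n-i`, and it requires `T2 - T1 ≥ C_{i+1}^{(T1)}`, which gives the lower bound
on `R_{i+1}^{(T2)}`. The pair `(i+1, n-i)` cannot have occurred before `T1`, since that would have made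
`C_{n-i}^{(T1)}` positive.
-/

open Finset

/-- The `n × n` payoff matrix `A` (1-based indices), closed form:
for `i ∈ {0,…,n/2−1}`: `A_{i+1,i+1} = 4i+2`, `A_{i+1,n−i} = 4i+3`, `A_{n−i,i+1} = 4i+1`;
for `i ∈ {1,…,n/2−1}`: `A_{n−i,n−i+1} = 4i`; all other entries `0`. -/
noncomputable def Amat (n i j : ℕ) : ℝ :=
  if i = j ∧ 1 ≤ i ∧ i ≤ n / 2 then 4 * (i : ℝ) - 2
  else if i + j = n + 1 ∧ 1 ≤ i ∧ i ≤ n / 2 then 4 * (i : ℝ) - 1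
  else if i + j = n + 1 ∧ 1 ≤ j ∧ j ≤ n / 2 then 4 * (j : ℝ) - 3
  else if j = i + 1 ∧ n / 2 + 1 ≤ i ∧ i ≤ n - 1 then 4 * ((n : ℝ) - (i : ℝ))
  else 0

/-- `x` is a probability vector over coordinates `{1,…,n}`. -/
def ProbVec (n : ℕ) (x : ℕ → ℝ) : Prop :=
  (∀ k ∈ Finset.Icc 1 n, 0 ≤ x k) ∧ ∑ k ∈ Finset.Icc 1 n, x k = 1

/-- The common payoff `xᵀ A y`. -/
noncomputable def pay (n : ℕ) (x y : ℕ → ℝ) : ℝ :=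
  ∑ i ∈ Finset.Icc 1 n, ∑ j ∈ Finset.Icc 1 n, x i * Amat n i j * y j

/-- `(x, y)` is an `ε`-approximate Nash equilibrium of the identical-payoff game with matrix `A`. -/
def IsNashEq (n : ℕ) (ε : ℝ) (x y : ℕ → ℝ) : Prop :=
  ProbVec n x ∧ ProbVec n y ∧
  (∀ x', ProbVec n x' → pay n x y ≥ pay n x' y - ε) ∧
  (∀ y', ProbVec n y' → pay n x y ≥ pay n x y' - ε)

/-- `(I t, J t)` (for `t = 1, 2, …`) is a fictitious play sequence for the
identical-payoff game with matrix `A`. -/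
def IsFPSeq (n : ℕ) (I J : ℕ → ℕ) : Prop :=
  (∀ t, 1 ≤ t → I t ∈ Finset.Icc 1 n ∧ J t ∈ Finset.Icc 1 n) ∧
  ∀ t, 2 ≤ t →
    (∀ i ∈ Finset.Icc 1 n,
      ∑ s ∈ Finset.Icc 1 (t - 1), Amat n i (J s) ≤
        ∑ s ∈ Finset.Icc 1 (t - 1), Amat n (I t) (J s)) ∧
    (∀ j ∈ Finset.Icc 1 n,
      ∑ s ∈ Finset.Icc 1 (t - 1), Amat n (I s) j ≤
        ∑ s ∈ Finset.Icc 1 (t - 1), Amat n (I s) (J t))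

/-- Cumulative utility of row `r` at round `t`. -/
noncomputable def Rcum (n : ℕ) (J : ℕ → ℕ) (t r : ℕ) : ℝ :=
  ∑ s ∈ Finset.Icc 1 (t - 1), Amat n r (J s)

/-- Cumulative utility of column `c` at round `t`. -/
noncomputable def Ccum (n : ℕ) (I : ℕ → ℕ) (t c : ℕ) : ℝ :=
  ∑ s ∈ Finset.Icc 1 (t - 1), Amat n (I s) c

/-- Empirical strategy at round `T` of the player playing the sequence `I`. -/
noncomputable def empir (T : ℕ) (I : ℕ → ℕ) (k : ℕ) : ℝ :=
  (1 / (T : ℝ)) * ∑ s ∈ Finset.Icc 1 T, if I s = k then (1 : ℝ) else 0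

/-- The `k`-th standard basis vector (pure strategy `k`). -/
noncomputable def purevec (k : ℕ) : ℕ → ℝ := fun m => if m = k then 1 else 0

lemma Amat_nonneg (n i j : ℕ) : 0 ≤ Amat n i j := by
  have h : ∀ k : ℕ, 1 ≤ k → (1 : ℝ) ≤ k := fun k hk => by exact_mod_cast hk
  unfold Amat
  split_ifs with h1 h2 h3 h4
  · linarith [h i h1.2.1]
  · linarith [h i h2.2.1]
  · linarith [h j h3.2.1]
  · have : (i : ℝ) ≤ n := by exact_mod_cast (by omega : i ≤ n)
    linarith
  · exact le_rfl

lemma Amat_diag {n i : ℕ} (h : i + 1 ≤ n / 2) : Amat n (i + 1) (i + 1) = 4 * (i : ℝ) + 2 := by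
  unfold Amat
  rw [if_pos (by omega)]
  push_cast
  ring

lemma Amat_anti {n i : ℕ} (h : i + 1 ≤ n / 2) : Amat n (i + 1) (n - i) = 4 * (i : ℝ) + 3 := by
  unfold Amat
  rw [if_neg (by omega), if_pos (by omega)]
  push_cast
  ring

lemma Amat_anti_low {n i : ℕ} (h : i + 1 ≤ n / 2) : Amat n (n - i) (i + 1) = 4 * (i : ℝ) + 1 := by
  unfold Amat
  rw [if_neg (by omega), if_neg (by omega), if_pos (by omega)]
  push_cast
  ring

lemma Amat_col_zero {n i r : ℕ} (h : i + 1 ≤ n / 2) (h1 : r ≠ i + 1) (h2 : r ≠ n - i) :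
    Amat n r (i + 1) = 0 := by
  unfold Amat
  rw [if_neg (by omega), if_neg (by omega), if_neg (by omega), if_neg (by omega)]

lemma Amat_row_zero {n i c : ℕ} (h : i + 1 ≤ n / 2) (h1 : c ≠ i + 1) (h2 : c ≠ n - i) :
    Amat n (i + 1) c = 0 := by
  unfold Amat
  rw [if_neg (by omega), if_neg (by omega), if_neg (by omega), if_neg (by omega)]

/-- If a sequence is constantly `a` on the `k` rounds starting at `T`, a sum over the rounds before
`T + k` of a function of it grows by `k` times the value at `a`. -/
lemma sum_const_block (f : ℕ → ℝ) (S : ℕ → ℕ) (T a : ℕ) (hT : 1 ≤ T) (k : ℕ)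
    (h : ∀ m < k, S (T + m) = a) :
    ∑ s ∈ Finset.Icc 1 (T + k - 1), f (S s) =
      ∑ s ∈ Finset.Icc 1 (T - 1), f (S s) + k * f a := by
  induction k with
  | zero => simp
  | succ k ih =>
    have e : T + (k + 1) - 1 = (T + k - 1) + 1 := by omega
    have e' : T + k - 1 + 1 = T + k := by omega
    rw [e, Finset.sum_Icc_succ_top (by omega), ih (fun m hm => h m (by omega)), e',
      h k (by omega)]
    push_cast
    ring

/-- While the column player keeps playing `i+1` from round `T1` on, so does the row player. -/
lemma row_stays {n i : ℕ} (hi : i + 1 ≤ n / 2) {I J : ℕ → ℕ} (hFP : IsFPSeq n I J)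
    {T1 : ℕ} (hT1 : 2 ≤ T1) (hI : I T1 = i + 1) (k : ℕ)
    (h : ∀ m < k, J (T1 + m) = i + 1) : I (T1 + k) = i + 1 := by
  rcases Nat.eq_zero_or_pos k with rfl | hk
  · exact hI
  by_contra hne
  have hk' : (1 : ℝ) ≤ k := by exact_mod_cast hk
  have hmem := (hFP.1 (T1 + k) (by omega)).1
  have h1 := (hFP.2 (T1 + k) (by omega)).1 (i + 1) (by rw [Finset.mem_Icc]; omega)
  have h0 := (hFP.2 T1 hT1).1 _ hmem
  rw [hI] at h0
  rw [sum_const_block (fun j => Amat n (i + 1) j) J T1 (i + 1) (by omega) k h,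
    sum_const_block (fun j => Amat n (I (T1 + k)) j) J T1 (i + 1) (by omega) k h] at h1
  -- The gain of row `i+1` in each round exceeds that of any other row by at least one.
  have hgap : Amat n (I (T1 + k)) (i + 1) + 1 ≤ Amat n (i + 1) (i + 1) := by
    rw [Amat_diag hi]
    by_cases h2 : I (T1 + k) = n - i
    · rw [h2, Amat_anti_low hi]; linarith
    · rw [Amat_col_zero hi hne h2]
      have : (0 : ℝ) ≤ i := Nat.cast_nonneg i
      linarith
  nlinarith

/-- second induction step: from the first play of `(i+1, i+1)` to the first
play of `(i+1, n−i)`. -/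
theorem fp_step_two
    (n : ℕ) (hn : 4 ≤ n) (hneven : Even n) (i : ℕ) (hi : i ≤ n / 2 - 2)
    (I J : ℕ → ℕ) (hFP : IsFPSeq n I J) (hI1 : I 1 = n) (hJ1 : J 1 = 1)
    (T1 : ℕ) (hT1 : 2 ≤ T1)
    (hplay : I T1 = i + 1 ∧ J T1 = i + 1)
    (hfirst : ∀ t, 1 ≤ t → t < T1 → (I t, J t) ≠ (i + 1, i + 1))
    (hprev : I (T1 - 1) = n - i ∧ J (T1 - 1) = i + 1)
    (hR : ∀ r, i + 2 ≤ r → r ≤ n - i - 1 → Rcum n J T1 r = 0)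
    (hC : ∀ c, i + 2 ≤ c → c ≤ n - i → Ccum n I T1 c = 0) :
    ∃ T2, T1 < T2 ∧
      (I T2 = i + 1 ∧ J T2 = n - i) ∧
      (∀ t, 1 ≤ t → t < T2 → (I t, J t) ≠ (i + 1, n - i)) ∧
      (∀ t, T1 ≤ t → t ≤ T2 - 1 → I t = i + 1 ∧ J t = i + 1) ∧
      Rcum n J T2 (i + 1) ≥ (4 * (i : ℝ) + 2) * Ccum n I T1 (i + 1) ∧
      (∀ r, i + 2 ≤ r → r ≤ n - i - 1 → Rcum n J T2 r = 0) ∧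
      (∀ c, i + 2 ≤ c → c ≤ n - i - 1 → Ccum n I T2 c = 0) := by
  have hi' : i + 1 ≤ n / 2 := by omega
  have hi0 : (0 : ℝ) ≤ i := Nat.cast_nonneg i
  obtain ⟨hIT, hJT⟩ := hplay
  have hCn : Ccum n I T1 (n - i) = 0 := hC _ (by omega) le_rfl
  have hCk : ∀ k c, (∀ m < k, J (T1 + m) = i + 1) →
      Ccum n I (T1 + k) c = Ccum n I T1 c + k * Amat n (i + 1) c := fun k c h =>
    sum_const_block (fun a => Amat n a c) I T1 (i + 1) (by omega) k
      (fun m hm => row_stays hi' hFP hT1 hIT m (fun l hl => h l (by omega)))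
  have hRk : ∀ k r, (∀ m < k, J (T1 + m) = i + 1) →
      Rcum n J (T1 + k) r = Rcum n J T1 r + k * Amat n r (i + 1) := fun k r h =>
    sum_const_block (fun a => Amat n r a) J T1 (i + 1) (by omega) k h
  have hex : ∃ k, J (T1 + k) ≠ i + 1 := by
    by_contra! hall
    obtain ⟨k, hk⟩ := exists_nat_gt (Ccum n I T1 (i + 1))
    have h : Ccum n I (T1 + k) (n - i) ≤ Ccum n I (T1 + k) (J (T1 + k)) :=
      (hFP.2 (T1 + k) (by omega)).2 (n - i) (by rw [Finset.mem_Icc]; omega)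
    rw [hall k, hCk k _ (fun m _ => hall m), hCk k _ (fun m _ => hall m), hCn,
      Amat_diag hi', Amat_anti hi'] at h
    linarith
  classical
  obtain ⟨k, hk, hmin⟩ : ∃ k, J (T1 + k) ≠ i + 1 ∧ ∀ m < k, J (T1 + m) = i + 1 :=
    ⟨Nat.find hex, Nat.find_spec hex, fun m hm => not_not.mp (Nat.find_min hex hm)⟩
  have hkpos : 0 < k := Nat.pos_of_ne_zero (by rintro rfl; exact hk hJT)
  have hk1 : (1 : ℝ) ≤ k := by exact_mod_cast hkpos
  have hopt : ∀ c ∈ Finset.Icc 1 n, Ccum n I (T1 + k) c ≤ Ccum n I (T1 + k) (J (T1 + k)) :=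
    (hFP.2 (T1 + k) (by omega)).2
  have hopt0 : Ccum n I T1 (J (T1 + k)) ≤ Ccum n I T1 (J T1) :=
    (hFP.2 T1 hT1).2 _ (hFP.1 (T1 + k) (by omega)).2
  have hopt1 := hopt (i + 1) (by rw [Finset.mem_Icc]; omega)
  rw [hCk k _ hmin, hCk k _ hmin, Amat_diag hi'] at hopt1
  have hJk : J (T1 + k) = n - i := by
    by_contra hne
    rw [Amat_row_zero hi' hk hne] at hopt1
    rw [hJT] at hopt0
    nlinarith
  have hkC : Ccum n I T1 (i + 1) ≤ k := by
    rw [hJk, hCn, Amat_anti hi'] at hopt1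
    linarith
  have hblock : ∀ t, T1 ≤ t → t < T1 + k → I t = i + 1 ∧ J t = i + 1 := by
    intro t h1 h2
    obtain ⟨m, rfl⟩ := Nat.exists_eq_add_of_le h1
    exact ⟨row_stays hi' hFP hT1 hIT m (fun l hl => hmin l (by omega)), hmin m (by omega)⟩
  refine ⟨T1 + k, by omega, ⟨row_stays hi' hFP hT1 hIT k hmin, hJk⟩, ?_, ?_, ?_, ?_, ?_⟩
  · intro t h1 h2 heq
    obtain ⟨hIt, hJt⟩ := Prod.mk.inj heq
    rcases lt_or_ge t T1 with hlt | hge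
    · have hle : Amat n (I t) (n - i) ≤ Ccum n I T1 (n - i) :=
        Finset.single_le_sum (f := fun s => Amat n (I s) (n - i))
          (fun s _ => Amat_nonneg _ _ _) (by rw [Finset.mem_Icc]; omega)
      rw [hCn, hIt, Amat_anti hi'] at hle
      linarith
    · have := (hblock t hge h2).2
      omega
  · intro t h1 h2
    exact hblock t h1 (by omega)
  · have hR0 : 0 ≤ Rcum n J T1 (i + 1) := Finset.sum_nonneg (fun s _ => Amat_nonneg _ _ _)
    rw [hRk k _ hmin, Amat_diag hi']
    nlinarith
  · intro r h1 h2
    rw [hRk k _ hmin, hR r h1 h2, Amat_col_zero hi' (by omega) (by omega)]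
    ring
  · intro c h1 h2
    rw [hCk k _ hmin, hC c h1 (by omega), Amat_row_zero hi' (by omega) (by omega)]
    ring
end

section
/- Let n ≥ 4 be an even integer, let A be the matrix defined below, and let i ∈ {0,…,n/2−2}. Consider any fictitious play sequence (i^{(t)}, j^{(t)}) for the identical-payoff game with matrix A with (i^{(1)}, j^{(1)}) = (n, 1). Suppose T₂ ≥ 2 is a round such that: (i^{(T₂)}, j^{(T₂)}) = (i+1, n−i) and the pair (i+1, n−i) is not played at any round t < T₂; (i^{(T₂−1)}, j^{(T₂−1)}) = (i+1, i+1); R^{(T₂)}_r = 0 for every row r with i+2 ≤ r ≤ n−i−1; and C^{(T₂)}_c = 0 for every column c with i+2 ≤ c ≤ n−i−1. Then there exists a round T₃ > T₂ such that: (i) (i^{(T₃)}, j^{(T₃)}) = (n−i−1, n−i) and the pair (n−i−1, n−i) is not played at any round t < T₃; (ii) (i^{(t)}, j^{(t)}) = (i+1, n−i) for every t with T₂ ≤ t ≤ T₃−1; (iii) C^{(T₃)}_{n−i} ≥ (4i+3)·R^{(T₂)}_{i+1}; (iv) R^{(T₃)}_r = 0 for every row r with i+2 ≤ r ≤ n−i−2,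 and C^{(T₃)}_c = 0 for every column c with i+2 ≤ c ≤ n−i−1. -/
/-!
While the row player sticks to `i + 1`, only columns `i + 1` and `n - i` gain, by `4i+2` and `4i+3`;
as column `n - i` is already optimal at `T2`, it is then the unique best response
(`col_of_rows_const`). While the column player sticks to `n - i`, only rows `i + 1` and `n - i - 1`
gain, by `4i+3` and `4i+4`. Row `i + 1` leads at `T2` with value `a`, and row `n - i - 1` starts
from `0`, so after `k ≥ 1` rounds the values are `a + (4i+3)k` and `(4i+4)k`, and every other row
is strictly behind. Hence the row player must leave `i + 1`, the first deviation is to `n - i - 1`,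
and it happens at some `k ≥ a`. That round is `T3`, and column `n - i` has gained
`(4i+3)k ≥ (4i+3)a` by then. The pair `(n - i - 1, n - i)` is not played before `T2`, since
a single earlier play of column `n - i` would make row `n - i - 1` positive at `T2`.
-/

open Finset

theorem Amat_nonneg_s14 (n r c : ℕ) : 0 ≤ Amat n r c := by
  unfold Amat
  split_ifs with h1 h2 h3 h4
  · have : (1 : ℝ) ≤ r := by exact_mod_cast h1.2.1
    linarith
  · have : (1 : ℝ) ≤ r := by exact_mod_cast h2.2.1
    linarith
  · have : (1 : ℝ) ≤ c := by exact_mod_cast h3.2.1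
    linarith
  · have : (r : ℝ) ≤ n := by exact_mod_cast (by omega : r ≤ n)
    linarith
  · exact le_rfl

/-- If `J` is constantly `b` on the `k` rounds from `T` on, `Rcum` grows linearly there. -/
theorem Rcum_run (n : ℕ) (J : ℕ → ℕ) (T b r : ℕ) (hT : 1 ≤ T) (k : ℕ)
    (h : ∀ m, m < k → J (T + m) = b) :
    Rcum n J (T + k) r = Rcum n J T r + k * Amat n r b := by
  induction k with
  | zero => simp
  | succ k ih =>
    have h1 : Rcum n J (T + (k + 1)) r = Rcum n J (T + k) r + Amat n r (J (T + k)) := by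
      unfold Rcum
      have e : T + (k + 1) - 1 = (T + k - 1) + 1 := by omega
      rw [e, Finset.sum_Icc_succ_top (by omega)]
      have e2 : T + k - 1 + 1 = T + k := by omega
      rw [e2]
    rw [h1, ih (fun m hm => h m (by omega)), h k (by omega)]
    push_cast
    ring

/-- If `I` is constantly `b` on the `k` rounds from `T` on, `Ccum` grows linearly there. -/
theorem Ccum_run (n : ℕ) (I : ℕ → ℕ) (T b c : ℕ) (hT : 1 ≤ T) (k : ℕ)
    (h : ∀ m, m < k → I (T + m) = b) :
    Ccum n I (T + k) c = Ccum n I T c + k * Amat n b c := by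
  induction k with
  | zero => simp
  | succ k ih =>
    have h1 : Ccum n I (T + (k + 1)) c = Ccum n I (T + k) c + Amat n (I (T + k)) c := by
      unfold Ccum
      have e : T + (k + 1) - 1 = (T + k - 1) + 1 := by omega
      rw [e, Finset.sum_Icc_succ_top (by omega)]
      have e2 : T + k - 1 + 1 = T + k := by omega
      rw [e2]
    rw [h1, ih (fun m hm => h m (by omega)), h k (by omega)]
    push_cast
    ring

theorem Amat_row_main (n i : ℕ) (hn : 4 ≤ n) (hi : i ≤ n / 2 - 2) :
    Amat n (i + 1) (n - i) = 4 * (i : ℝ) + 3 := by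
  unfold Amat
  rw [if_neg (by omega), if_pos (by omega)]
  push_cast
  ring

theorem Amat_row_diag (n i : ℕ) (hn : 4 ≤ n) (hi : i ≤ n / 2 - 2) :
    Amat n (i + 1) (i + 1) = 4 * (i : ℝ) + 2 := by
  unfold Amat
  rw [if_pos (by omega)]
  push_cast
  ring

theorem Amat_row_other (n i c : ℕ) (hn : 4 ≤ n) (hi : i ≤ n / 2 - 2) (h1 : c ≠ i + 1)
    (h2 : c ≠ n - i) : Amat n (i + 1) c = 0 := by
  unfold Amat
  rw [if_neg (by omega), if_neg (by omega), if_neg (by omega), if_neg (by omega)]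

theorem Amat_col_sub (n i : ℕ) (hn : 4 ≤ n) (hi : i ≤ n / 2 - 2) :
    Amat n (n - i - 1) (n - i) = 4 * (i : ℝ) + 4 := by
  unfold Amat
  rw [if_neg (by omega), if_neg (by omega), if_neg (by omega), if_pos (by omega)]
  have : n - i - 1 = n - (i + 1) := by omega
  rw [this, Nat.cast_sub (by omega)]
  push_cast
  ring

theorem Amat_col_other (n i r : ℕ) (hn : 4 ≤ n) (hi : i ≤ n / 2 - 2) (h1 : r ≠ i + 1)
    (h2 : r ≠ n - i - 1) : Amat n r (n - i) = 0 := by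
  unfold Amat
  rw [if_neg (by omega), if_neg (by omega), if_neg (by omega), if_neg (by omega)]

/-- As long as the row player has kept to `i + 1` since `T`, where column `n - i` was played, the
column player keeps to `n - i`. -/
theorem col_of_rows_const (n i : ℕ) (hn : 4 ≤ n) (hi : i ≤ n / 2 - 2) (I J : ℕ → ℕ)
    (hFP : IsFPSeq n I J) (T : ℕ) (hT : 2 ≤ T) (hJ : J T = n - i) (k : ℕ)
    (h : ∀ m, m < k → I (T + m) = i + 1) : J (T + k) = n - i := by
  rcases Nat.eq_zero_or_pos k with rfl | hk
  · simpa using hJ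
  by_contra hne
  have hmem := (hFP.1 (T + k) (by omega)).2
  have opt : Ccum n I T (J (T + k)) ≤ Ccum n I T (n - i) := by
    have := (hFP.2 T hT).2 _ hmem
    rwa [hJ] at this
  have opt' : Ccum n I (T + k) (n - i) ≤ Ccum n I (T + k) (J (T + k)) :=
    (hFP.2 (T + k) (by omega)).2 (n - i) (Finset.mem_Icc.2 (by omega))
  rw [Ccum_run n I T (i + 1) _ (by omega) k h, Ccum_run n I T (i + 1) _ (by omega) k h,
    Amat_row_main n i hn hi] at opt'
  have hk' : (0 : ℝ) < k := by exact_mod_cast hk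
  have hle : Amat n (i + 1) (J (T + k)) ≤ 4 * (i : ℝ) + 2 := by
    by_cases h1 : J (T + k) = i + 1
    · rw [h1, Amat_row_diag n i hn hi]
    · rw [Amat_row_other n i _ hn hi h1 hne]
      positivity
  nlinarith

/-- third induction step: from the first play of `(i+1, n−i)` to the first
play of `(n−i−1, n−i)`. -/
theorem fp_step_three
    (n : ℕ) (hn : 4 ≤ n) (hneven : Even n) (i : ℕ) (hi : i ≤ n / 2 - 2)
    (I J : ℕ → ℕ) (hFP : IsFPSeq n I J) (hI1 : I 1 = n) (hJ1 : J 1 = 1)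
    (T2 : ℕ) (hT2 : 2 ≤ T2)
    (hplay : I T2 = i + 1 ∧ J T2 = n - i)
    (hfirst : ∀ t, 1 ≤ t → t < T2 → (I t, J t) ≠ (i + 1, n - i))
    (hprev : I (T2 - 1) = i + 1 ∧ J (T2 - 1) = i + 1)
    (hR : ∀ r, i + 2 ≤ r → r ≤ n - i - 1 → Rcum n J T2 r = 0)
    (hC : ∀ c, i + 2 ≤ c → c ≤ n - i - 1 → Ccum n I T2 c = 0) :
    ∃ T3, T2 < T3 ∧
      (I T3 = n - i - 1 ∧ J T3 = n - i) ∧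
      (∀ t, 1 ≤ t → t < T3 → (I t, J t) ≠ (n - i - 1, n - i)) ∧
      (∀ t, T2 ≤ t → t ≤ T3 - 1 → I t = i + 1 ∧ J t = n - i) ∧
      Ccum n I T3 (n - i) ≥ (4 * (i : ℝ) + 3) * Rcum n J T2 (i + 1) ∧
      (∀ r, i + 2 ≤ r → r ≤ n - i - 2 → Rcum n J T3 r = 0) ∧
      (∀ c, i + 2 ≤ c → c ≤ n - i - 1 → Ccum n I T3 c = 0) := by
  obtain ⟨hI2, hJ2⟩ := hplay
  have hRsub : Rcum n J T2 (n - i - 1) = 0 := hR _ (by omega) (by omega)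
  -- the row player cannot keep to row `i + 1` forever
  have hex : ∃ k, I (T2 + k) ≠ i + 1 := by
    by_contra! hall
    have hJall : ∀ m, J (T2 + m) = n - i := fun m =>
      col_of_rows_const n i hn hi I J hFP T2 hT2 hJ2 m (fun m' _ => hall m')
    obtain ⟨k, hk⟩ := exists_nat_gt (Rcum n J T2 (i + 1))
    have opt : Rcum n J (T2 + k) (n - i - 1) ≤ Rcum n J (T2 + k) (I (T2 + k)) :=
      (hFP.2 (T2 + k) (by omega)).1 (n - i - 1) (Finset.mem_Icc.2 (by omega))
    rw [hall k, Rcum_run n J T2 (n - i) _ (by omega) k (fun m _ => hJall m),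
      Rcum_run n J T2 (n - i) _ (by omega) k (fun m _ => hJall m), hRsub,
      Amat_col_sub n i hn hi, Amat_row_main n i hn hi] at opt
    nlinarith
  classical
  obtain ⟨k, hkI, hmin⟩ : ∃ k, I (T2 + k) ≠ i + 1 ∧ ∀ m, m < k → I (T2 + m) = i + 1 :=
    ⟨Nat.find hex, Nat.find_spec hex, fun m hm => not_not.1 (Nat.find_min hex hm)⟩
  have hkpos : 0 < k := by
    rcases Nat.eq_zero_or_pos k with rfl | h
    · exact absurd (by simpa using hI2) hkI
    · exact h
  have hJk : ∀ m, m ≤ k → J (T2 + m) = n - i := fun m hm =>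
    col_of_rows_const n i hn hi I J hFP T2 hT2 hJ2 m (fun m' hm' => hmin m' (by omega))
  have hRk : ∀ r, Rcum n J (T2 + k) r = Rcum n J T2 r + k * Amat n r (n - i) := fun r =>
    Rcum_run n J T2 (n - i) r (by omega) k (fun m hm => hJk m hm.le)
  have hCk : ∀ c, Ccum n I (T2 + k) c = Ccum n I T2 c + k * Amat n (i + 1) c := fun c =>
    Ccum_run n I T2 (i + 1) c (by omega) k hmin
  have hk' : (0 : ℝ) < k := by exact_mod_cast hkpos
  have hmem := (hFP.1 (T2 + k) (by omega)).1
  have optk : Rcum n J (T2 + k) (i + 1) ≤ Rcum n J (T2 + k) (I (T2 + k)) :=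
    (hFP.2 (T2 + k) (by omega)).1 (i + 1) (Finset.mem_Icc.2 (by omega))
  rw [hRk, hRk, Amat_row_main n i hn hi] at optk
  have hi0 : (0 : ℝ) ≤ i := Nat.cast_nonneg i
  have hIk : I (T2 + k) = n - i - 1 := by
    by_contra hne
    rw [Amat_col_other n i _ hn hi hkI hne] at optk
    have opt2 : Rcum n J T2 (I (T2 + k)) ≤ Rcum n J T2 (i + 1) := by
      have := (hFP.2 T2 hT2).1 _ hmem
      rwa [hI2] at this
    nlinarith
  have hak : Rcum n J T2 (i + 1) ≤ k := by
    rw [hIk, hRsub, Amat_col_sub n i hn hi] at optk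
    linarith
  refine ⟨T2 + k, by omega, ⟨hIk, hJk k le_rfl⟩, ?_, ?_, ?_, ?_, ?_⟩
  · intro t ht1 ht heq
    rw [Prod.mk.injEq] at heq
    rcases lt_or_ge t T2 with hlt | hge
    · -- an earlier play of column `n - i` contradicts `R_{n-i-1} = 0` at `T2`
      have hle : Amat n (n - i - 1) (J t) ≤ Rcum n J T2 (n - i - 1) :=
        Finset.single_le_sum (f := fun s => Amat n (n - i - 1) (J s))
          (fun s _ => Amat_nonneg_s14 _ _ _) (Finset.mem_Icc.2 (by omega))
      rw [heq.2, Amat_col_sub n i hn hi, hRsub] at hle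
      linarith
    · have := hmin (t - T2) (by omega)
      rw [Nat.add_sub_cancel' hge] at this
      omega
  · intro t ht ht'
    have h1 := hmin (t - T2) (by omega)
    have h2 := hJk (t - T2) (by omega)
    rw [Nat.add_sub_cancel' ht] at h1 h2
    exact ⟨h1, h2⟩
  · have hC0 : 0 ≤ Ccum n I T2 (n - i) := Finset.sum_nonneg (fun s _ => Amat_nonneg_s14 _ _ _)
    rw [hCk, Amat_row_main n i hn hi]
    nlinarith
  · intro r h1 h2
    rw [hRk, hR r h1 (by omega), Amat_col_other n i r hn hi (by omega) (by omega)]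
    simp
  · intro c h1 h2
    rw [hCk, hC c h1 h2, Amat_row_other n i c hn hi (by omega) (by omega)]
    simp
end
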